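/- arXiv:2205.14258 — 12 statements merged into one kernel-verified Lean document; each statement's English description precedes it below -/
import Mathlib

section
/- Let σ : ℝ → ℝ be a function and n a positive natural number such that the matrix σ(I_n) (entrywise application of σ to the n×n identity matrix) is invertible. Then G_{σ_n} is a subgroup of GL_n(ℝ); in particular, the identity matrix lies in G_{σ_n}, and for all A₁, A₂ ∈ G_{σ_n} the product A₁·A₂⁻¹ lies in G_{σ_n}. -/
open Matrix

noncomputable section

/-- Coordinatewise application of `σ : ℝ → ℝ` to vectors in `ℝ^n`. -/
def actCoord (σ : ℝ → ℝ) (n : ℕ) (x : Fin n → ℝ) : Fin n → ℝ := fun i => σ (x i)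

/-- The intertwiner group `G_{σ_n}` of the nonlinearity `σ_n`, as a set of invertible
`n × n` real matrices. -/
def Intertwiner (σ : ℝ → ℝ) (n : ℕ) : Set (Matrix (Fin n) (Fin n) ℝ) :=
  {A | IsUnit A ∧ ∃ B : Matrix (Fin n) (Fin n) ℝ, IsUnit B ∧
    ∀ x : Fin n → ℝ, actCoord σ n (A.mulVec x) = B.mulVec (actCoord σ n x)}

/-- If `σ(I_n)` is invertible, then `G_{σ_n}` is a subgroup of `GL_n(ℝ)`: it contains the
identity and is closed under `A₁ * A₂⁻¹`. -/
theorem intertwiner_is_subgroup (σ : ℝ → ℝ) (n : ℕ) (hn : 0 < n)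
    (hσI : IsUnit ((1 : Matrix (Fin n) (Fin n) ℝ).map σ)) :
    (1 : Matrix (Fin n) (Fin n) ℝ) ∈ Intertwiner σ n ∧
    ∀ A₁ A₂ : Matrix (Fin n) (Fin n) ℝ,
      A₁ ∈ Intertwiner σ n → A₂ ∈ Intertwiner σ n →
      A₁ * A₂⁻¹ ∈ Intertwiner σ n := by
  refine ⟨⟨isUnit_one, 1, isUnit_one, fun x => by simp⟩, ?_⟩
  rintro A₁ A₂ ⟨h1, B₁, hB1, e1⟩ ⟨h2, B₂, hB2, e2⟩
  have d2 := (Matrix.isUnit_iff_isUnit_det A₂).1 h2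
  have dB := (Matrix.isUnit_iff_isUnit_det B₂).1 hB2
  refine ⟨h1.mul (Matrix.isUnit_nonsing_inv_iff.2 h2), B₁ * B₂⁻¹,
    hB1.mul (Matrix.isUnit_nonsing_inv_iff.2 hB2), fun x => ?_⟩
  have h := e2 (A₂⁻¹.mulVec x)
  rw [Matrix.mulVec_mulVec, Matrix.mul_nonsing_inv _ d2, Matrix.one_mulVec] at h
  rw [← Matrix.mulVec_mulVec, e1, ← Matrix.mulVec_mulVec, h, Matrix.mulVec_mulVec _ B₂⁻¹ B₂,
    Matrix.nonsing_inv_mul _ dB, Matrix.one_mulVec]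
end
end

section
/- Let σ : ℝ → ℝ be a function and n a positive natural number such that σ(I_n) is invertible, and define φ_σ(A) := σ(A)·σ(I_n)^{-1}. Then for every A ∈ G_{σ_n}, one has σ_n ∘ A = φ_σ(A) ∘ σ_n as functions ℝ^n → ℝ^n; that is, the unique B with σ_n ∘ A = B ∘ σ_n is B = σ(A)·σ(I_n)^{-1}. -/
open Matrix

noncomputable section

/-- `φ_σ(A) = σ(A) · σ(I_n)⁻¹`, where `σ` is applied entrywise. -/
def phiMap (σ : ℝ → ℝ) (n : ℕ) (A : Matrix (Fin n) (Fin n) ℝ) :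
    Matrix (Fin n) (Fin n) ℝ :=
  A.map σ * ((1 : Matrix (Fin n) (Fin n) ℝ).map σ)⁻¹

/-- If `σ(I_n)` is invertible, then for every `A ∈ G_{σ_n}` one has
`σ_n ∘ A = φ_σ(A) ∘ σ_n`, and `φ_σ(A) = σ(A)·σ(I_n)⁻¹` is the unique matrix `B`
with `σ_n ∘ A = B ∘ σ_n`. -/
theorem phi_intertwines_and_unique (σ : ℝ → ℝ) (n : ℕ) (hn : 0 < n)
    (hσI : IsUnit ((1 : Matrix (Fin n) (Fin n) ℝ).map σ)) :
    ∀ A ∈ Intertwiner σ n,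
      (∀ x : Fin n → ℝ,
        actCoord σ n (A.mulVec x) = (phiMap σ n A).mulVec (actCoord σ n x)) ∧
      ∀ B : Matrix (Fin n) (Fin n) ℝ,
        (∀ x : Fin n → ℝ,
          actCoord σ n (A.mulVec x) = B.mulVec (actCoord σ n x)) →
        B = phiMap σ n A := by
  intro A hA
  have key : ∀ B : Matrix (Fin n) (Fin n) ℝ,
      (∀ x : Fin n → ℝ,
        actCoord σ n (A.mulVec x) = B.mulVec (actCoord σ n x)) →
      B = phiMap σ n A := by
    intro B hB
    have h : A.map σ = B * (1 : Matrix (Fin n) (Fin n) ℝ).map σ := by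
      ext i j
      have h1 := congrFun (hB (Pi.single j 1)) i
      simp only [actCoord, Matrix.mulVec_single_one, Matrix.col_apply] at h1
      rw [Matrix.map_apply, h1, Matrix.mul_apply, Matrix.mulVec, dotProduct]
      refine Finset.sum_congr rfl fun k _ => ?_
      simp [actCoord, Matrix.map_apply, Matrix.one_apply, Pi.single_apply]
    have hdet := (Matrix.isUnit_iff_isUnit_det _).mp hσI
    rw [phiMap, h, Matrix.mul_nonsing_inv_cancel_right _ _ hdet]
  refine ⟨?_, key⟩
  obtain ⟨_, B, _, hB⟩ := hA
  rw [← key B hB]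
  exact hB
end
end

section
/- Let σ : ℝ → ℝ be a function and n a positive natural number such that σ(I_n) is invertible, and define φ_σ(A) := σ(A)·σ(I_n)^{-1}. Then φ_σ restricted to G_{σ_n} is a group homomorphism into GL_n(ℝ): for all A₁, A₂ ∈ G_{σ_n}, φ_σ(A₁·A₂⁻¹) = φ_σ(A₁)·φ_σ(A₂)⁻¹. -/
open Matrix

noncomputable section

theorem map_mul_aux (σ : ℝ → ℝ) (n : ℕ) (A B M : Matrix (Fin n) (Fin n) ℝ)
    (h : ∀ x : Fin n → ℝ, actCoord σ n (A.mulVec x) = B.mulVec (actCoord σ n x)) :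
    (A * M).map σ = B * M.map σ := by
  ext i j
  exact congrFun (h (fun k => M k j)) i

/-- If `σ(I_n)` is invertible, then `φ_σ` restricted to `G_{σ_n}` is a group homomorphism
into `GL_n(ℝ)`: `φ_σ(A₁·A₂⁻¹) = φ_σ(A₁)·φ_σ(A₂)⁻¹` for all `A₁, A₂ ∈ G_{σ_n}`. -/
theorem phi_is_hom (σ : ℝ → ℝ) (n : ℕ) (hn : 0 < n)
    (hσI : IsUnit ((1 : Matrix (Fin n) (Fin n) ℝ).map σ)) :
    ∀ A₁ ∈ Intertwiner σ n, ∀ A₂ ∈ Intertwiner σ n,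
      phiMap σ n (A₁ * A₂⁻¹) = phiMap σ n A₁ * (phiMap σ n A₂)⁻¹ := by
  rintro A₁ ⟨_, B₁, _, h₁⟩ A₂ ⟨hA₂, B₂, hB₂, h₂⟩
  have hS := (Matrix.isUnit_iff_isUnit_det _).mp hσI
  have hA := (Matrix.isUnit_iff_isUnit_det _).mp hA₂
  have hB := (Matrix.isUnit_iff_isUnit_det _).mp hB₂
  have key : ∀ A B : Matrix (Fin n) (Fin n) ℝ,
      (∀ x : Fin n → ℝ, actCoord σ n (A.mulVec x) = B.mulVec (actCoord σ n x)) →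
      phiMap σ n A = B := by
    intro A B h
    have := map_mul_aux σ n A B 1 h
    rw [mul_one] at this
    rw [phiMap, this, Matrix.mul_nonsing_inv_cancel_right _ _ hS]
  rw [key A₁ B₁ h₁, key A₂ B₂ h₂, phiMap, map_mul_aux σ n A₁ B₁ _ h₁]
  have e := map_mul_aux σ n A₂ B₂ A₂⁻¹ h₂
  rw [Matrix.mul_nonsing_inv _ hA] at e
  have e2 : (A₂⁻¹).map σ = B₂⁻¹ * (1 : Matrix (Fin n) (Fin n) ℝ).map σ := by
    rw [e, Matrix.nonsing_inv_mul_cancel_left _ _ hB]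
  rw [e2, ← mul_assoc, Matrix.mul_nonsing_inv_cancel_right _ _ hS]
end
end

section
/- Let σ : ℝ → ℝ be non-constant, non-linear (there are no c, d ∈ ℝ with σ(x) = c·x + d for all x), and differentiable at every point of ℝ ∖ S for some finite set S ⊆ ℝ. Then for every n ≥ 1, every A ∈ G_{σ_n} is of the form A = P·D where P is an n×n permutation matrix and D is an invertible diagonal matrix; equivalently, every row of A has exactly one nonzero entry, and these nonzero entries lie in distinct columns. -/
open Matrix

noncomputable section

lemma affine_of_additive (σ : ℝ → ℝ) (x0 : ℝ) (hc : ContinuousAt σ x0)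
    (h : ∀ u v, σ (u + v) = σ u + σ v - σ 0) : ∃ c d : ℝ, ∀ x : ℝ, σ x = c * x + d := by
  let g : ℝ →+ ℝ := AddMonoidHom.mk' (fun x => σ x - σ 0) (by intro a b; simp only [h a b]; ring)
  have hg0 : ContinuousAt g 0 := by
    have h1 : (g : ℝ → ℝ) = fun t => σ (x0 + t) - σ x0 := by
      funext t
      change σ t - σ 0 = _
      rw [h]; ring
    rw [h1]
    have h2 : ContinuousAt (fun t : ℝ => x0 + t) 0 := by fun_prop
    have h3 : ContinuousAt σ ((fun t : ℝ => x0 + t) 0) := by simpa using hc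
    exact (ContinuousAt.comp (g := σ) (f := fun t : ℝ => x0 + t) h3 h2).sub continuousAt_const
  have hg : Continuous g := continuous_of_continuousAt_zero g hg0
  refine ⟨g 1, σ 0, fun x => ?_⟩
  have h4 := map_real_smul g hg x 1
  simp only [smul_eq_mul, mul_one] at h4
  have h5 : g x = σ x - σ 0 := rfl
  rw [h5] at h4
  linarith

lemma row_unique (σ : ℝ → ℝ) (hnl : ¬ ∃ c d : ℝ, ∀ x : ℝ, σ x = c * x + d)
    (x0 : ℝ) (hc : ContinuousAt σ x0) (n : ℕ) (A B : Matrix (Fin n) (Fin n) ℝ)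
    (h : ∀ x : Fin n → ℝ, actCoord σ n (A.mulVec x) = B.mulVec (actCoord σ n x))
    (i j k : Fin n) (hj : A i j ≠ 0) (hk : A i k ≠ 0) : j = k := by
  by_contra hjk
  apply hnl
  apply affine_of_additive σ x0 hc
  have key : ∀ s t : ℝ, σ (A i j * s + A i k * t)
      = ∑ l, B i l * σ ((Pi.single j s + Pi.single k t : Fin n → ℝ) l) := by
    intro s t
    have h1 := congrFun (h (Pi.single j s + Pi.single k t)) i
    have h2 : A.mulVec (Pi.single j s + Pi.single k t) i = A i j * s + A i k * t := by
      rw [Matrix.mulVec_add, Pi.add_apply]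
      simp [Matrix.mulVec_single]
    rw [actCoord, h2] at h1
    exact h1
  intro u v
  have e1 := key (u / A i j) (v / A i k)
  have e2 := key (u / A i j) 0
  have e3 := key 0 (v / A i k)
  have e4 := key 0 0
  rw [mul_div_cancel₀ _ hj, mul_div_cancel₀ _ hk] at e1
  rw [mul_div_cancel₀ _ hj, mul_zero, add_zero] at e2
  rw [mul_div_cancel₀ _ hk, mul_zero, zero_add] at e3
  rw [mul_zero, mul_zero, zero_add] at e4
  rw [e1, e2, e3, e4, ← Finset.sum_add_distrib, ← Finset.sum_sub_distrib]
  apply Finset.sum_congr rfl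
  intro l _
  by_cases h1 : l = j
  · subst h1
    simp [Pi.single_apply, hjk]
  · simp [Pi.single_apply, h1]

/-- If `σ` is non-constant, non-linear, and differentiable away from a finite set, then every
`A ∈ G_{σ_n}` is of the form `P·D` with `P` a permutation matrix and `D` an invertible
diagonal matrix: i.e. `A i j = if i = π j then D j else 0` with all `D j ≠ 0`. -/
theorem intertwiner_struct (σ : ℝ → ℝ)
    (hnc : ¬ ∃ c : ℝ, ∀ x : ℝ, σ x = c)
    (hnl : ¬ ∃ c d : ℝ, ∀ x : ℝ, σ x = c * x + d)
    (S : Set ℝ) (hS : S.Finite)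
    (hdiff : ∀ x : ℝ, x ∉ S → DifferentiableAt ℝ σ x)
    (n : ℕ) (hn : 1 ≤ n)
    (A : Matrix (Fin n) (Fin n) ℝ) (hA : A ∈ Intertwiner σ n) :
    ∃ (π : Equiv.Perm (Fin n)) (D : Fin n → ℝ),
      (∀ j, D j ≠ 0) ∧ ∀ i j, A i j = if i = π j then D j else 0 := by
  obtain ⟨hAu, B, -, hAB⟩ := hA
  obtain ⟨x0, hx0⟩ := hS.exists_notMem
  have hc := (hdiff x0 hx0).continuousAt
  have hu := row_unique σ hnl x0 hc n A B hAB
  have hdet : A.det ≠ 0 := ((Matrix.isUnit_iff_isUnit_det A).1 hAu).ne_zero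
  have hrow : ∀ i, ∃ j, A i j ≠ 0 := by
    intro i
    by_contra hcon
    push Not at hcon
    exact hdet (Matrix.det_eq_zero_of_row_eq_zero i hcon)
  have hcol : ∀ j, ∃ i, A i j ≠ 0 := by
    intro j
    by_contra hcon
    push Not at hcon
    exact hdet (Matrix.det_eq_zero_of_column_eq_zero j hcon)
  choose r hr using hrow
  have hsurj : Function.Surjective r := by
    intro j
    obtain ⟨i, hi⟩ := hcol j
    exact ⟨i, hu i _ _ (hr i) hi⟩
  let e : Equiv.Perm (Fin n) :=
    Equiv.ofBijective r ⟨Finite.injective_iff_surjective.2 hsurj, hsurj⟩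
  have her : ∀ i, e i = r i := fun i => rfl
  refine ⟨e.symm, fun j => A (e.symm j) j, fun j => ?_, fun i j => ?_⟩
  · have := hr (e.symm j)
    rwa [← her, Equiv.apply_symm_apply] at this
  · split_ifs with hij
    · exact congrArg (fun t => A t j) hij
    · by_contra hne
      apply hij
      rw [Equiv.eq_symm_apply, her]
      exact hu i _ _ (hr i) hne
end
end

section
/- Let σ : ℝ → ℝ be non-constant, non-linear (there are no c, d ∈ ℝ with σ(x) = c·x + d for all x), and differentiable at every point of ℝ ∖ S for some finite set S ⊆ ℝ. If D = diag(λ_1,…,λ_n) is an invertible diagonal matrix with D ∈ G_{σ_n}, then there exist real numbers μ_1,…,μ_n, all nonzero, such that σ(λ_i·x) = μ_i·σ(x) for all x ∈ ℝ and all i (so each λ_i ∈ G_{σ_1}), and σ_n ∘ D = diag(μ_1,…,μ_n) ∘ σ_n. -/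
open Matrix

noncomputable section

/-- If `σ` is non-constant, non-linear, and differentiable away from a finite set, and the
invertible diagonal matrix `D = diag(λ₁,…,λ_n)` lies in `G_{σ_n}`, then there are nonzero
reals `μ₁,…,μ_n` with `σ(λᵢ·x) = μᵢ·σ(x)` for all `x` (so each `λᵢ ∈ G_{σ_1}`), and
`σ_n ∘ D = diag(μ₁,…,μ_n) ∘ σ_n`. -/
theorem intertwiner_diagonal_struct (σ : ℝ → ℝ)
    (hnc : ¬ ∃ c : ℝ, ∀ x : ℝ, σ x = c)
    (hnl : ¬ ∃ c d : ℝ, ∀ x : ℝ, σ x = c * x + d)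
    (S : Set ℝ) (hS : S.Finite)
    (hdiff : ∀ x : ℝ, x ∉ S → DifferentiableAt ℝ σ x)
    (n : ℕ) (hn : 0 < n)
    (l : Fin n → ℝ) (hl : ∀ i, l i ≠ 0)
    (hD : Matrix.diagonal l ∈ Intertwiner σ n) :
    ∃ μ : Fin n → ℝ, (∀ i, μ i ≠ 0) ∧
      (∀ (i : Fin n) (x : ℝ), σ (l i * x) = μ i * σ x) ∧
      (∀ x : Fin n → ℝ,
        actCoord σ n ((Matrix.diagonal l).mulVec x) =
          (Matrix.diagonal μ).mulVec (actCoord σ n x)) := by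
  obtain ⟨-, B, -, hB⟩ := hD
  have hne : ∃ a b : ℝ, σ a ≠ σ b := by
    by_contra h
    push Not at h
    exact hnc ⟨σ 0, fun x => h x 0⟩
  obtain ⟨a, b, hab⟩ := hne
  have key : ∀ (x : Fin n → ℝ) (i : Fin n), σ (l i * x i) = ∑ j, B i j * σ (x j) := by
    intro x i
    have h := congrFun (hB x) i
    simpa [actCoord, Matrix.mulVec_diagonal, Matrix.mulVec, dotProduct,
      Matrix.diagonal_apply] using h
  have hoff : ∀ i j : Fin n, j ≠ i → B i j = 0 := by
    intro i j hij
    have h1 := key (Function.update (fun _ => b) j a) i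
    have h2 := key (fun _ => b) i
    rw [Function.update_of_ne hij.symm] at h1
    rw [h1, ← sub_eq_zero, ← Finset.sum_sub_distrib, Finset.sum_eq_single j] at h2
    · rw [Function.update_self, ← mul_sub] at h2
      exact (mul_eq_zero.mp h2).resolve_right (sub_ne_zero.mpr hab)
    · intro k _ hk
      rw [Function.update_of_ne hk, sub_self]
    · intro h
      exact absurd (Finset.mem_univ j) h
  have hdiag : ∀ (i : Fin n) (x : ℝ), σ (l i * x) = B i i * σ x := by
    intro i x
    rw [key (fun _ => x) i, Finset.sum_eq_single i]
    · intro k _ hk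
      rw [hoff i k hk, zero_mul]
    · intro h
      exact absurd (Finset.mem_univ i) h
  refine ⟨fun i => B i i, ?_, hdiag, ?_⟩
  · intro i h0
    replace h0 : B i i = 0 := h0
    apply hnc
    refine ⟨0, fun x => ?_⟩
    have h := hdiag i (x / l i)
    rw [mul_div_cancel₀ _ (hl i)] at h
    rw [h, h0, zero_mul]
  · intro x
    ext i
    simp only [actCoord, Matrix.mulVec_diagonal]
    exact hdiag i (x i)
end
end

section
/- Let ReLU(x) = max(0, x) and let ReLU_n : ℝ^n → ℝ^n apply ReLU coordinatewise. An invertible n×n real matrix A belongs to G_{ReLU_n} (i.e., there exists B ∈ GL_n(ℝ) with ReLU_n ∘ A = B ∘ ReLU_n) if and only if A = P·D for some n×n permutation matrix P and some diagonal matrix D with strictly positive diagonal entries; moreover in that case ReLU_n ∘ A = A ∘ ReLU_n. -/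
open Matrix

noncomputable section

/-- Coordinatewise application of `ReLU(x) = max 0 x` to vectors in `ℝ^n`. -/
def reluVec (n : ℕ) (x : Fin n → ℝ) : Fin n → ℝ := fun i => max 0 (x i)

theorem relu_aux_comm (n : ℕ) (A : Matrix (Fin n) (Fin n) ℝ) (π : Equiv.Perm (Fin n))
    (d : Fin n → ℝ) (hd : ∀ j, 0 < d j) (h : ∀ i j, A i j = if i = π j then d j else 0)
    (x : Fin n → ℝ) : reluVec n (A.mulVec x) = A.mulVec (reluVec n x) := by
  have key : ∀ (y : Fin n → ℝ) (i : Fin n), A.mulVec y i = d (π.symm i) * y (π.symm i) := by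
    intro y i
    simp only [Matrix.mulVec, dotProduct]
    rw [Finset.sum_eq_single (π.symm i)]
    · rw [h]; simp
    · intro b _ hb
      rw [h, if_neg, zero_mul]
      rintro rfl
      simp at hb
    · simp
  funext i
  rw [key]
  simp only [reluVec]
  rw [key, mul_max_of_nonneg _ _ (hd _).le, mul_zero]

theorem relu_aux_forward (n : ℕ) (A B : Matrix (Fin n) (Fin n) ℝ) (hA : IsUnit A)
    (h : ∀ x : Fin n → ℝ, reluVec n (A.mulVec x) = B.mulVec (reluVec n x)) :
    ∃ (π : Equiv.Perm (Fin n)) (d : Fin n → ℝ),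
        (∀ j, 0 < d j) ∧ ∀ i j, A i j = if i = π j then d j else 0 := by
  have hdet : A.det ≠ 0 := ((Matrix.isUnit_iff_isUnit_det A).1 hA).ne_zero
  have hnn : ∀ i j, 0 ≤ A i j := by
    intro i j
    have h1 := congrFun (h (-Pi.single j 1)) i
    have h2 : reluVec n (-Pi.single j 1) = 0 := by
      funext k
      by_cases hk : k = j
      · subst hk; simp [reluVec]
      · simp [reluVec, hk]
    rw [h2, Matrix.mulVec_neg, Matrix.mulVec_single_one] at h1
    simpa [reluVec] using h1
  have hsame : ∀ i j, A i j = B i j := by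
    intro i j
    have h1 := congrFun (h (Pi.single j 1)) i
    have h2 : reluVec n (Pi.single j 1) = Pi.single j 1 := by
      funext k
      by_cases hk : k = j
      · subst hk; simp [reluVec]
      · simp [reluVec, hk]
    rw [h2, Matrix.mulVec_single_one, Matrix.mulVec_single_one] at h1
    simpa [reluVec, hnn i j] using h1
  have hrow : ∀ i j k, j ≠ k → A i j ≠ 0 → A i k = 0 := by
    intro i j k hjk hij
    have h1 := congrFun (h (Pi.single j 1 - Pi.single k 1)) i
    have h2 : reluVec n (Pi.single j 1 - Pi.single k 1) = Pi.single j 1 := by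
      funext l
      by_cases hl : l = j
      · subst hl; simp [reluVec, hjk]
      · by_cases hk : l = k
        · subst hk; simp [reluVec, hl]
        · simp [reluVec, hl, hk]
    rw [h2, Matrix.mulVec_sub, Matrix.mulVec_single_one, Matrix.mulVec_single_one,
      Matrix.mulVec_single_one] at h1
    simp only [reluVec, Pi.sub_apply, Matrix.col_apply, ← hsame] at h1
    rcases max_choice 0 (A i j - A i k) with h3 | h3
    · exact absurd (h1.symm.trans h3) hij
    · linarith
  have hex : ∀ i, ∃ j, A i j ≠ 0 := by
    intro i
    by_contra! hc
    exact hdet (Matrix.det_eq_zero_of_row_eq_zero i hc)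
  choose σ hσ using hex
  have hu : ∀ i j, A i j ≠ 0 → j = σ i := by
    intro i j hij
    by_contra hc
    exact hij (hrow i (σ i) j (fun e => hc e.symm) (hσ i))
  have hsurj : Function.Surjective σ := by
    intro j
    by_contra! hc
    refine hdet (Matrix.det_eq_zero_of_column_eq_zero j fun i => ?_)
    by_contra hij
    exact hc i (hu i j hij).symm
  let e : Equiv.Perm (Fin n) :=
    Equiv.ofBijective σ ⟨Finite.injective_iff_surjective.2 hsurj, hsurj⟩
  have he : ∀ i, e i = σ i := fun i => rfl
  refine ⟨e.symm, fun j => A (e.symm j) j, fun j => ?_, fun i j => ?_⟩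
  · have := hσ (e.symm j)
    rw [← he, Equiv.apply_symm_apply] at this
    exact lt_of_le_of_ne (hnn _ _) this.symm
  · split_ifs with hij
    · rw [hij]
    · by_contra hc
      apply hij
      rw [hu i j hc, ← he, Equiv.symm_apply_apply]

/-- An invertible `n × n` real matrix `A` lies in `G_{ReLU_n}` iff `A = P·D` for a
permutation matrix `P` and a diagonal matrix `D` with strictly positive entries
(equivalently `A i j = if i = π j then d j else 0` with `d j > 0`); moreover in that case
`ReLU_n ∘ A = A ∘ ReLU_n`. -/
theorem relu_intertwiner_characterization (n : ℕ) (hn : 0 < n)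
    (A : Matrix (Fin n) (Fin n) ℝ) (hA : IsUnit A) :
    ((∃ B : Matrix (Fin n) (Fin n) ℝ, IsUnit B ∧
        ∀ x : Fin n → ℝ, reluVec n (A.mulVec x) = B.mulVec (reluVec n x)) ↔
      ∃ (π : Equiv.Perm (Fin n)) (d : Fin n → ℝ),
        (∀ j, 0 < d j) ∧ ∀ i j, A i j = if i = π j then d j else 0) ∧
    ((∃ B : Matrix (Fin n) (Fin n) ℝ, IsUnit B ∧
        ∀ x : Fin n → ℝ, reluVec n (A.mulVec x) = B.mulVec (reluVec n x)) →
      ∀ x : Fin n → ℝ, reluVec n (A.mulVec x) = A.mulVec (reluVec n x)) := by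
  refine ⟨⟨?_, ?_⟩, ?_⟩
  · rintro ⟨B, _, h⟩
    exact relu_aux_forward n A B hA h
  · rintro ⟨π, d, hd, h⟩
    exact ⟨A, hA, relu_aux_comm n A π d hd h⟩
  · rintro ⟨B, _, h⟩
    obtain ⟨π, d, hd, h'⟩ := relu_aux_forward n A B hA h
    exact relu_aux_comm n A π d hd h'
end
end

section
/- Let v = (v_1,…,v_n) ∈ ℝ^n have at least two nonzero coordinates v_i ≠ 0 and v_j ≠ 0 with i ≠ j. Then any set of rays in ℝ^n that contains ℝ_{≥0}·v and is stabilized by every matrix of the form P·D (P an n×n permutation matrix, D diagonal with strictly positive entries) is infinite. Consequently, if ℝ_{≥0}·v_1, …, ℝ_{≥0}·v_N is a finite set of rays generated by nonzero vectors and stabilized by all such matrices, then each v_i has exactly one nonzero coordinate, i.e., up to multiplication by a positive scalar each v_i is of the form ±e_j for some j. -/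
open Matrix

noncomputable section

/-- The ray `ℝ_{≥0}·v ⊆ ℝ^n` generated by `v`. -/
def ray (n : ℕ) (v : Fin n → ℝ) : Set (Fin n → ℝ) :=
  {w | ∃ t : ℝ, 0 ≤ t ∧ w = t • v}

/-- `A` is of the form `P·D` with `P` a permutation matrix and `D` diagonal with strictly
positive entries, i.e. an element of `G_{ReLU_n}`. -/
def IsPermPosDiag (n : ℕ) (A : Matrix (Fin n) (Fin n) ℝ) : Prop :=
  ∃ (π : Equiv.Perm (Fin n)) (d : Fin n → ℝ),
    (∀ j, 0 < d j) ∧ ∀ i j, A i j = if i = π j then d j else 0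

theorem infinite_aux (n : ℕ) (v : Fin n → ℝ) (i j : Fin n) (hij : i ≠ j) (hi : v i ≠ 0)
    (hj : v j ≠ 0) (S : Set (Set (Fin n → ℝ))) (hS : ray n v ∈ S)
    (H : ∀ A : Matrix (Fin n) (Fin n) ℝ, IsPermPosDiag n A →
          (fun r => (fun w => A.mulVec w) '' r) '' S = S) : S.Infinite := by
  let d : ℕ → Fin n → ℝ := fun m k => if k = i then (m : ℝ) + 1 else 1
  let f : ℕ → Set (Fin n → ℝ) := fun m =>
    (fun w => (Matrix.diagonal (d m)).mulVec w) '' ray n v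
  refine Set.infinite_of_injective_forall_mem (f := f) ?_ ?_
  · intro a b hab
    have hmem : (Matrix.diagonal (d a)).mulVec v ∈ f b := by
      rw [← hab]
      exact ⟨v, ⟨1, zero_le_one, (one_smul ℝ v).symm⟩, rfl⟩
    obtain ⟨w, ⟨t, ht, rfl⟩, hw⟩ := hmem
    have h1 := congrFun hw j
    have h2 := congrFun hw i
    simp only [Matrix.mulVec_diagonal, Pi.smul_apply, smul_eq_mul, d, if_neg hij.symm,
      if_true, one_mul] at h1 h2
    have ht1 : t = 1 := by
      apply mul_right_cancel₀ hj
      rw [h1, one_mul]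
    rw [ht1, one_mul] at h2
    have h3 := mul_right_cancel₀ hi h2
    have h4 : (b : ℝ) = a := by linarith
    exact_mod_cast h4.symm
  · intro m
    have hA : IsPermPosDiag n (Matrix.diagonal (d m)) := by
      refine ⟨Equiv.refl _, d m, ?_, ?_⟩
      · intro k
        simp only [d]
        split_ifs <;> positivity
      · intro k l
        rw [Matrix.diagonal_apply]
        by_cases hkl : k = l
        · subst hkl; simp
        · simp [hkl]
    rw [← H _ hA]
    exact ⟨_, hS, rfl⟩

/-- If `v ∈ ℝ^n` has at least two nonzero coordinates, then any set of rays containing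
`ℝ_{≥0}·v` and stabilized by every `P·D` (permutation times positive diagonal) is infinite.
Consequently, a finite family of rays generated by nonzero vectors and stabilized by all
such matrices consists only of rays generated by vectors having exactly one nonzero
coordinate. -/
theorem rays_with_two_nonzero_coords (n : ℕ) :
    (∀ (v : Fin n → ℝ) (i j : Fin n), i ≠ j → v i ≠ 0 → v j ≠ 0 →
      ∀ S : Set (Set (Fin n → ℝ)), ray n v ∈ S →
        (∀ A : Matrix (Fin n) (Fin n) ℝ, IsPermPosDiag n A →
          (fun r => (fun w => A.mulVec w) '' r) '' S = S) →
        S.Infinite) ∧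
    (∀ (N : ℕ) (u : Fin N → (Fin n → ℝ)), (∀ k, u k ≠ 0) →
      (∀ A : Matrix (Fin n) (Fin n) ℝ, IsPermPosDiag n A →
        (fun r => (fun w => A.mulVec w) '' r) '' {r | ∃ k, r = ray n (u k)} =
          {r | ∃ k, r = ray n (u k)}) →
      ∀ k, ∃ j₀ : Fin n, u k j₀ ≠ 0 ∧ ∀ j, j ≠ j₀ → u k j = 0) := by
  refine ⟨infinite_aux n, ?_⟩
  intro N u hu H k
  obtain ⟨j₀, hj₀⟩ := Function.ne_iff.mp (hu k)
  refine ⟨j₀, hj₀, ?_⟩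
  intro j hj
  by_contra hne
  refine infinite_aux n (u k) j j₀ hj hne hj₀ {r | ∃ k, r = ray n (u k)} ⟨k, rfl⟩ H ?_
  refine (Set.finite_range (fun k => ray n (u k))).subset ?_
  rintro r ⟨l, rfl⟩
  exact ⟨l, rfl⟩
end
end

section
/- Fix s ∈ ℝ with 0 < s < 1 and define LeakyReLU_s(x) := s·x + (1−s)·max(0, x). If a, b ∈ ℝ with a ≠ 0 satisfy LeakyReLU_s(a·x) = b·LeakyReLU_s(x) for all x ∈ ℝ, then a > 0 and b = a. -/
/-- The one-dimensional intertwiner group of `LeakyReLU` with negative slope `0 < s < 1`: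
if `a ≠ 0` and `LeakyReLU_s(a·x) = b·LeakyReLU_s(x)` for all `x`, then `a > 0` and `b = a`,
where `LeakyReLU_s(x) = s·x + (1−s)·max 0 x`. -/
theorem leakyrelu_one_dim_intertwiner (s : ℝ) (hs0 : 0 < s) (hs1 : s < 1)
    (a b : ℝ) (ha : a ≠ 0)
    (h : ∀ x : ℝ, s * (a * x) + (1 - s) * max 0 (a * x) =
      b * (s * x + (1 - s) * max 0 x)) :
    0 < a ∧ b = a := by
  have h1 := h 1
  have h2 := h (-1)
  rw [max_eq_right (by norm_num : (0:ℝ) ≤ 1)] at h1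
  rw [max_eq_left (by norm_num : (-1:ℝ) ≤ 0)] at h2
  rcases lt_or_gt_of_ne ha with hn | hp
  · exfalso
    rw [max_eq_left (by linarith)] at h1
    rw [max_eq_right (by linarith)] at h2
    have hb : b = s * a := by linarith
    subst hb
    have h3 : a * ((1 - s) * (1 + s)) = 0 := by linarith
    have h4 : (1 - s) * (1 + s) > 0 := mul_pos (by linarith) (by linarith)
    exact (mul_ne_zero ha h4.ne') h3
  · rw [max_eq_right (by linarith)] at h1
    exact ⟨hp, by linarith⟩
end

section
/- Let σ(x) = exp(x)/(1 + exp(x)) be the sigmoid function. If a, b ∈ ℝ satisfy σ(a·x) = b·σ(x) for all x ∈ ℝ, then a = 1 and b = 1. -/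
/-- The one-dimensional intertwiner group of the sigmoid `σ(x) = eˣ/(1+eˣ)`:
if `σ(a·x) = b·σ(x)` for all `x`, then `a = 1` and `b = 1`. -/
theorem sigmoid_one_dim_intertwiner (a b : ℝ)
    (h : ∀ x : ℝ,
      Real.exp (a * x) / (1 + Real.exp (a * x)) =
        b * (Real.exp x / (1 + Real.exp x))) :
    a = 1 ∧ b = 1 := by
  have hb : b = 1 := by
    have h0 := h 0
    rw [mul_zero, Real.exp_zero] at h0
    linarith
  refine ⟨?_, hb⟩
  have h1 := h 1
  rw [hb, mul_one, one_mul] at h1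
  have p1 := Real.exp_pos a
  have p2 := Real.exp_pos 1
  rw [div_eq_div_iff (by positivity) (by positivity)] at h1
  apply Real.exp_injective
  linarith
end

section
/- Let σ(x) = (1/√(2π))·exp(−x²/2) be the Gaussian radial basis function. If a, b ∈ ℝ with a ≠ 0 satisfy σ(a·x) = b·σ(x) for all x ∈ ℝ, then a = 1 or a = −1, and b = 1. -/
open Real

/-- The one-dimensional intertwiner group of the Gaussian RBF
`σ(x) = (1/√(2π))·exp(−x²/2)`: if `a ≠ 0` and `σ(a·x) = b·σ(x)` for all `x`,
then `a = 1` or `a = −1`, and `b = 1`. -/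
theorem gaussian_rbf_one_dim_intertwiner (a b : ℝ) (ha : a ≠ 0)
    (h : ∀ x : ℝ,
      (1 / Real.sqrt (2 * Real.pi)) * Real.exp (-(a * x) ^ 2 / 2) =
        b * ((1 / Real.sqrt (2 * Real.pi)) * Real.exp (-x ^ 2 / 2))) :
    (a = 1 ∨ a = -1) ∧ b = 1 := by
  have hc : (1 / Real.sqrt (2 * Real.pi)) ≠ 0 := by positivity
  have h' : ∀ x : ℝ, Real.exp (-(a * x) ^ 2 / 2) = b * Real.exp (-x ^ 2 / 2) := by
    intro x
    apply mul_left_cancel₀ hc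
    rw [h x]
    ring
  have hb : b = 1 := by
    have h0 := h' 0
    simp at h0
    exact h0.symm
  have h1 := h' 1
  rw [hb, one_mul] at h1
  have h2 := Real.exp_injective h1
  refine ⟨sq_eq_sq_iff_eq_or_eq_neg.mp ?_, hb⟩
  nlinarith [h2]
end

section
/- Fix k ≥ 1, dimensions n_0,…,n_k ≥ 1, a function σ : ℝ → ℝ with σ(I_{n_i}) invertible for 1 ≤ i ≤ k−1, weights W_i ∈ ℝ^{n_i×n_{i−1}} and biases b_i ∈ ℝ^{n_i}. Define layers ℓ_i(x) = σ_{n_i}(W_i·x + b_i) for 1 ≤ i < k and ℓ_k(x) = W_k·x + b_k; set f_{≤m} := ℓ_m ∘ ⋯ ∘ ℓ_1 and f_{>m} := ℓ_k ∘ ⋯ ∘ ℓ_{m+1}, and f := ℓ_k ∘ ⋯ ∘ ℓ_1. Given A_i ∈ G_{σ_{n_i}} for 1 ≤ i ≤ k−1, define transformed weights W'_1 := A_1·W_1, b'_i := A_i·b_i for 1 ≤ i ≤ k−1, W'_i := A_i·W_i·φ_σ(A_{i−1})^{−1} for 2 ≤ i ≤ k−1, W'_k := W_k·φ_σ(A_{k−1})^{−1},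 b'_k := b_k, and let f'_{≤m}, f'_{>m}, f' denote the corresponding compositions with the primed weights. Then for each 1 ≤ m ≤ k−1: f'_{≤m}(x) = φ_σ(A_m)·f_{≤m}(x) and f'_{>m}(x) = f_{>m}(φ_σ(A_m)^{−1}·x) for all x; in particular f'(x) = f(x) for all x ∈ ℝ^{n_0}. -/
open Matrix

noncomputable section

/-- `fwdHidden σ n W b m = f_{≤ m}`: the composition of the first `m` activated layers
`ℓ_m ∘ ⋯ ∘ ℓ_1`, where (0-indexed) `ℓ_{i+1}(x) = σ_{n (i+1)}(W i · x + b i)`. -/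
def fwdHidden (σ : ℝ → ℝ) (n : ℕ → ℕ)
    (W : ∀ i : ℕ, Matrix (Fin (n (i + 1))) (Fin (n i)) ℝ)
    (b : ∀ i : ℕ, Fin (n (i + 1)) → ℝ) :
    ∀ m : ℕ, (Fin (n 0) → ℝ) → (Fin (n m) → ℝ)
  | 0 => id
  | (m + 1) => fun x => fun i => σ (((W m).mulVec (fwdHidden σ n W b m x) + b m) i)

/-- `seg σ n W b m j`: the composition of the `j` activated layers `ℓ_{m+j} ∘ ⋯ ∘ ℓ_{m+1}`,
taking inputs at layer `m`. -/
def seg (σ : ℝ → ℝ) (n : ℕ → ℕ)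
    (W : ∀ i : ℕ, Matrix (Fin (n (i + 1))) (Fin (n i)) ℝ)
    (b : ∀ i : ℕ, Fin (n (i + 1)) → ℝ) (m : ℕ) :
    ∀ j : ℕ, (Fin (n m) → ℝ) → (Fin (n (m + j)) → ℝ)
  | 0 => id
  | (j + 1) => fun x => fun i =>
      σ (((W (m + j)).mulVec (seg σ n W b m j x) + b (m + j)) i)

theorem phiMap_spec (σ : ℝ → ℝ) (n : ℕ) (A : Matrix (Fin n) (Fin n) ℝ)
    (hI : IsUnit ((1 : Matrix (Fin n) (Fin n) ℝ).map σ)) (hA : A ∈ Intertwiner σ n) :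
    IsUnit (phiMap σ n A) ∧
      ∀ x : Fin n → ℝ, actCoord σ n (A.mulVec x) = (phiMap σ n A).mulVec (actCoord σ n x) := by
  obtain ⟨_, B, hB, h⟩ := hA
  have key : A.map σ = B * (1 : Matrix (Fin n) (Fin n) ℝ).map σ := by
    ext i j
    have h1 := congrFun (h (Pi.single j 1)) i
    have h2 : actCoord σ n (Pi.single j 1) =
        fun l => (1 : Matrix (Fin n) (Fin n) ℝ).map σ l j := by
      funext l
      simp [actCoord, Matrix.one_apply, Pi.single_apply]
    rw [h2] at h1
    simpa [actCoord, Matrix.mul_apply, Matrix.mulVec, dotProduct, Pi.single_apply] using h1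
  have e : phiMap σ n A = B := by
    unfold phiMap
    rw [key, Matrix.mul_nonsing_inv_cancel_right _ _ ((Matrix.isUnit_iff_isUnit_det _).1 hI)]
  rw [e]
  exact ⟨hB, h⟩

/-- Weight-space symmetries from intertwiner groups.  The network has depth `k = m + r + 1`,
dimensions `n 0, …, n k`, activated layers `ℓ_i(x) = σ_{n_i}(W_{i-1}·x + b_{i-1})`
(0-indexed weights) for `i < k` and final linear layer `ℓ_k(x) = W_{k-1}·x + b_{k-1}`.
Given `A_i ∈ G_{σ_{n_i}}` for `1 ≤ i ≤ k - 1 = m + r` (and `A_k = 1`), the transformed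
weights `W'` and biases `b'` (per `hW'0, hW', hb'`) satisfy, for the layer `m`
(with `1 ≤ m ≤ k - 1`):
`f'_{≤m} = φ_σ(A_m) ∘ f_{≤m}`, `f'_{>m} = f_{>m} ∘ φ_σ(A_m)⁻¹`, and `f' = f`. -/
theorem intertwiner_weight_symmetry (σ : ℝ → ℝ) (n : ℕ → ℕ) (hn : ∀ i, 0 < n i)
    (m r : ℕ) (hm : 1 ≤ m)
    (hσI : ∀ i : ℕ, 1 ≤ i → i ≤ m + r →
      IsUnit ((1 : Matrix (Fin (n i)) (Fin (n i)) ℝ).map σ))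
    (W : ∀ i : ℕ, Matrix (Fin (n (i + 1))) (Fin (n i)) ℝ)
    (b : ∀ i : ℕ, Fin (n (i + 1)) → ℝ)
    (A : ∀ i : ℕ, Matrix (Fin (n i)) (Fin (n i)) ℝ)
    (hA : ∀ i : ℕ, 1 ≤ i → i ≤ m + r → A i ∈ Intertwiner σ (n i))
    (hAtop : A (m + r + 1) = 1)
    (W' : ∀ i : ℕ, Matrix (Fin (n (i + 1))) (Fin (n i)) ℝ)
    (b' : ∀ i : ℕ, Fin (n (i + 1)) → ℝ)
    (hW'0 : W' 0 = A 1 * W 0)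
    (hW' : ∀ i : ℕ, 1 ≤ i → i ≤ m + r →
      W' i = A (i + 1) * W i * (phiMap σ (n i) (A i))⁻¹)
    (hb' : ∀ i : ℕ, i ≤ m + r → b' i = (A (i + 1)).mulVec (b i)) :
    (∀ x : Fin (n 0) → ℝ,
      fwdHidden σ n W' b' m x = (phiMap σ (n m) (A m)).mulVec (fwdHidden σ n W b m x)) ∧
    (∀ y : Fin (n m) → ℝ,
      (W' (m + r)).mulVec (seg σ n W' b' m r y) + b' (m + r) =
        (W (m + r)).mulVec
          (seg σ n W b m r ((phiMap σ (n m) (A m))⁻¹.mulVec y)) + b (m + r)) ∧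
    (∀ x : Fin (n 0) → ℝ,
      (W' (m + r)).mulVec (fwdHidden σ n W' b' (m + r) x) + b' (m + r) =
        (W (m + r)).mulVec (fwdHidden σ n W b (m + r) x) + b (m + r)) := by
  have hphi := fun i h1 h2 => phiMap_spec σ (n i) (A i) (hσI i h1 h2) (hA i h1 h2)
  have hpre : ∀ i, 1 ≤ i → i ≤ m + r → ∀ v : Fin (n i) → ℝ,
      (W' i).mulVec ((phiMap σ (n i) (A i)).mulVec v) + b' i =
        (A (i + 1)).mulVec ((W i).mulVec v + b i) := by
    intro i h1 h2 v
    have hu := (Matrix.isUnit_iff_isUnit_det _).1 (hphi i h1 h2).1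
    rw [hW' i h1 h2, hb' i h2, Matrix.mulVec_mulVec, Matrix.nonsing_inv_mul_cancel_right _ _ hu,
      Matrix.mulVec_add, Matrix.mulVec_mulVec]
  have hfwd : ∀ j, j + 1 ≤ m + r → ∀ x : Fin (n 0) → ℝ,
      fwdHidden σ n W' b' (j + 1) x =
        (phiMap σ (n (j + 1)) (A (j + 1))).mulVec (fwdHidden σ n W b (j + 1) x) := by
    intro j
    induction j with
    | zero =>
      intro hj x
      have := (hphi 1 le_rfl hj).2 ((W 0).mulVec x + b 0)
      rw [Matrix.mulVec_add, Matrix.mulVec_mulVec, ← hW'0, ← hb' 0 (Nat.zero_le _)] at this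
      exact this
    | succ j ih =>
      intro hj x
      have := (hphi (j + 2) (by omega) hj).2
        ((W (j + 1)).mulVec (fwdHidden σ n W b (j + 1) x) + b (j + 1))
      rw [← hpre (j + 1) (by omega) (by omega), ← ih (by omega)] at this
      exact this
  have hseg : ∀ j, j ≤ r → ∀ y : Fin (n m) → ℝ,
      seg σ n W' b' m j y = (phiMap σ (n (m + j)) (A (m + j))).mulVec
        (seg σ n W b m j ((phiMap σ (n m) (A m))⁻¹.mulVec y)) := by
    intro j
    induction j with
    | zero =>
      intro _ y
      have hu := (Matrix.isUnit_iff_isUnit_det _).1 (hphi m hm (by omega)).1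
      change y = (phiMap σ (n m) (A m)).mulVec ((phiMap σ (n m) (A m))⁻¹.mulVec y)
      rw [Matrix.mulVec_mulVec, Matrix.mul_nonsing_inv _ hu, Matrix.one_mulVec]
    | succ j ih =>
      intro hj y
      have := (hphi (m + j + 1) (by omega) (by omega)).2
        ((W (m + j)).mulVec (seg σ n W b m j ((phiMap σ (n m) (A m))⁻¹.mulVec y)) + b (m + j))
      rw [← hpre (m + j) (by omega) (by omega), ← ih (by omega)] at this
      exact this
  have hfwd' : ∀ i, 1 ≤ i → i ≤ m + r → ∀ x : Fin (n 0) → ℝ,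
      fwdHidden σ n W' b' i x = (phiMap σ (n i) (A i)).mulVec (fwdHidden σ n W b i x) := by
    intro i h1 h2
    obtain ⟨j, rfl⟩ : ∃ j, i = j + 1 := ⟨i - 1, by omega⟩
    exact hfwd j h2
  refine ⟨hfwd' m hm (by omega), fun y => ?_, fun x => ?_⟩
  · rw [hseg r le_rfl, hpre (m + r) (by omega) le_rfl, hAtop, Matrix.one_mulVec]
  · rw [hfwd' (m + r) (by omega) le_rfl, hpre (m + r) (by omega) le_rfl, hAtop,
      Matrix.one_mulVec]
end
end

section
/- Let A be a d×d real matrix such that max_{1≤i≤d}((A·x)_i·(A·y)_i) = max_{1≤i≤d}(x_i·y_i) for all x, y ∈ ℝ^d. Then A = P·D where P is a d×d permutation matrix and D is a diagonal matrix whose diagonal entries all lie in {+1, −1}; equivalently, there exist a permutation π of {1,…,d} and signs ε_1,…,ε_d ∈ {+1,−1} such that A·e_j = ε_j·e_{π(j)} for all j. -/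
open Matrix

noncomputable section

/-- If a `d × d` real matrix `A` preserves the quantity `max_i (x_i·y_i)` in the sense that
`max_i ((Ax)_i·(Ay)_i) = max_i (x_i·y_i)` for all `x, y ∈ ℝ^d`, then `A = P·D` with `P` a
permutation matrix and `D` diagonal with entries in `{±1}`: there exist a permutation `π`
and signs `ε_j ∈ {1, -1}` with `A·e_j = ε_j·e_{π j}` for all `j`. -/
theorem hadamard_max_symmetries (d : ℕ) (hd : 0 < d)
    (A : Matrix (Fin d) (Fin d) ℝ)
    (h : ∀ x y : Fin d → ℝ,
      Finset.univ.sup' (⟨⟨0, hd⟩, Finset.mem_univ _⟩ : Finset.univ.Nonempty)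
          (fun i => A.mulVec x i * A.mulVec y i) =
        Finset.univ.sup' (⟨⟨0, hd⟩, Finset.mem_univ _⟩ : Finset.univ.Nonempty)
          (fun i => x i * y i)) :
    ∃ (π : Equiv.Perm (Fin d)) (ε : Fin d → ℝ),
      (∀ j, ε j = 1 ∨ ε j = -1) ∧
      ∀ j, A.mulVec (Pi.single j 1) = ε j • (Pi.single (π j) 1 : Fin d → ℝ) := by
  have hle : ∀ x : Fin d → ℝ, (∀ i, x i * x i ≤ 1) → ∀ i, A.mulVec x i * A.mulVec x i ≤ 1 := by
    intro x hx i
    have h1 := Finset.le_sup' (fun i => A.mulVec x i * A.mulVec x i) (Finset.mem_univ i)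
    have h2 := h x x
    have h3 := Finset.sup'_le (⟨⟨0, hd⟩, Finset.mem_univ _⟩ : Finset.univ.Nonempty)
      (fun i => x i * x i) (a := 1) (fun i _ => hx i)
    exact h1.trans (h2.le.trans h3)
  have hex : ∀ j, ∃ i, A i j * A i j = 1 := by
    intro j
    obtain ⟨i, -, hi⟩ := Finset.exists_mem_eq_sup'
      (⟨⟨0, hd⟩, Finset.mem_univ _⟩ : Finset.univ.Nonempty)
      (fun i => A.mulVec (Pi.single j 1) i * A.mulVec (Pi.single j 1) i)
    have h1 := Finset.le_sup' (fun i => (Pi.single j 1 : Fin d → ℝ) i *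
      (Pi.single j 1 : Fin d → ℝ) i) (Finset.mem_univ j)
    have h2 := h (Pi.single j 1) (Pi.single j 1)
    have h3 := hle (Pi.single j 1) (by
      intro i
      by_cases hij : i = j
      · subst hij; simp
      · simp [hij]) i
    have h4 := h1.trans (h2.symm.le.trans hi.le)
    refine ⟨i, ?_⟩
    simp at h3 h4
    linarith
  choose p hp using hex
  have hzero : ∀ j k, j ≠ k → A (p j) k = 0 := by
    intro j k hjk
    have key : ∀ s : ℝ, s * s = 1 → (A (p j) j + s * A (p j) k) * (A (p j) j + s * A (p j) k) ≤ 1 := by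
      intro s hs
      have := hle (Pi.single j 1 + s • Pi.single k 1) (by
        intro i
        by_cases hij : i = j
        · subst hij; simp [hjk]
        · by_cases hik : i = k
          · subst hik; simp [hij, hs]
          · simp [hij, hik]) (p j)
      simpa [Matrix.mulVec_add, Matrix.mulVec_smul] using this
    have k1 := key 1 (by norm_num)
    have k2 := key (-1) (by norm_num)
    have := hp j
    have : A (p j) k * A (p j) k = 0 := by nlinarith [mul_self_nonneg (A (p j) k)]
    exact mul_self_eq_zero.mp this
  have hinj : Function.Injective p := by
    intro j k hjk
    by_contra hne
    have h1 := hzero j k hne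
    have h2 := hp k
    rw [← hjk, h1] at h2
    norm_num at h2
  have hbij := Finite.injective_iff_bijective.mp hinj
  refine ⟨Equiv.ofBijective p hbij, fun j => A (p j) j, fun j => mul_self_eq_one_iff.mp (hp j), ?_⟩
  intro j
  ext i
  obtain ⟨k, rfl⟩ := hbij.2 i
  by_cases hkj : k = j
  · subst hkj; simp
  · have : p k ≠ p j := fun e => hkj (hinj e)
    simp [this, hzero k j hkj]
end
end
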